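/- Let g = γ*h, g_ε = γ_{g_ε,h_ε}*h_ε. Then ‖γ − γ_{g_ε,h_ε}‖²_{L²(ρ)} ≤ (2/m_ω^{h_ε}) ( M_ω^γ ‖h − h_ε‖²_{L²(ρ)} + ‖g − g_ε‖²_{H¹_α(ρ)} ). -/

import Mathlib

open MeasureTheory Complex Real

/-- Laplace transform of a real function on `[0,∞)`. -/
noncomputable def laplace (f : ℝ → ℝ) (z : ℂ) : ℂ :=
  ∫ t in Set.Ioi (0 : ℝ), (f t : ℂ) * Complex.exp (-z * t)

/-- Causal convolution on `[0,∞)`. -/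
noncomputable def conv (f h : ℝ → ℝ) (t : ℝ) : ℝ :=
  ∫ s in (0 : ℝ)..t, f (t - s) * h s

/-- Combined spectral weight `α₁|f̂(z)|² + α₂|zf̂(z)|²` along the line `Re z = ω`. -/
noncomputable def specWeight (f : ℝ → ℝ) (α₁ α₂ ω τ : ℝ) : ℝ :=
  α₁ * ‖laplace f ((ω : ℂ) + τ * Complex.I)‖ ^ 2 +
    α₂ * ‖((ω : ℂ) + τ * Complex.I) * laplace f ((ω : ℂ) + τ * Complex.I)‖ ^ 2

open FourierTransform SchwartzMap in
lemma planch_aux (f : ℝ → ℂ) (h1 : Integrable f) (h2 : MemLp f 2) :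
    MemLp (𝓕 f) 2 ∧ ∫ x, ‖𝓕 f x‖ ^ 2 = ∫ x, ‖f x‖ ^ 2 := by
  have hcont : Continuous (𝓕 f) :=
    VectorFourier.fourierIntegral_continuous Real.continuous_fourierChar
      (by exact continuous_inner) h1
  have hae : (𝓕 (h2.toLp f) : Lp ℂ 2 (volume : Measure ℝ)) =ᵐ[volume] 𝓕 f := by
    apply ae_eq_of_integral_contDiff_smul_eq
    · exact (Lp.memLp _).locallyIntegrable (by norm_num)
    · exact hcont.locallyIntegrable
    · intro g gs gc
      have hg₁ : HasCompactSupport (Complex.ofRealCLM ∘ g) := gc.comp_left rfl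
      have hg₂ : ContDiff ℝ (⊤ : ℕ∞) (Complex.ofRealCLM ∘ g) := by fun_prop
      set u : 𝓢(ℝ, ℂ) := hg₁.toSchwartzMap hg₂ with hu
      have e1 : ((𝓕 (h2.toLp f) : Lp ℂ 2 (volume : Measure ℝ)) : 𝓢'(ℝ, ℂ)) u
          = ∫ x, 𝓕 u x • f x := by
        rw [← Lp.fourier_toTemperedDistribution_eq, TemperedDistribution.fourier_apply,
          Lp.toTemperedDistribution_apply]
        apply integral_congr_ae
        filter_upwards [h2.coeFn_toLp] with x hx
        rw [hx]
      have e2 : ∫ x, 𝓕 u x • f x = ∫ x, u x • 𝓕 f x := by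
        simpa using! VectorFourier.integral_fourierIntegral_smul_eq_flip (L := innerₗ ℝ)
          Real.continuous_fourierChar continuous_inner u.integrable h1
      rw [e2, Lp.toTemperedDistribution_apply] at e1
      simpa [hu] using e1
  have hm : MemLp (𝓕 f) 2 := (memLp_congr_ae hae).1 (Lp.memLp _)
  refine ⟨hm, ?_⟩
  have key := Lp.norm_fourier_eq (h2.toLp f)
  have sq : ∀ w : Lp ℂ 2 (volume : Measure ℝ), ‖w‖ ^ 2 = ∫ x, ‖w x‖ ^ 2 := by
    intro w
    have := L2.inner_def (𝕜 := ℂ) w w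
    rw [inner_self_eq_norm_sq_to_K] at this
    have h3 : ((‖w‖ ^ 2 : ℝ) : ℂ) = ((∫ x, ‖w x‖ ^ 2 : ℝ) : ℂ) := by
      push_cast
      rw [← integral_complex_ofReal]
      rw [show ((‖w‖ : ℂ)) = ((RCLike.ofReal ‖w‖ : ℂ)) from rfl, this]
      congr 1 with x
      rw [inner_self_eq_norm_sq_to_K]; simp
    exact_mod_cast h3
  have k2 : ‖(𝓕 (h2.toLp f) : Lp ℂ 2 (volume : Measure ℝ))‖ ^ 2 = ‖h2.toLp f‖ ^ 2 := by rw [key]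
  rw [sq, sq] at k2
  have c1 : ∫ x, ‖𝓕 f x‖ ^ 2 = ∫ x, ‖(𝓕 (h2.toLp f) : Lp ℂ 2 (volume : Measure ℝ)) x‖ ^ 2 := by
    apply integral_congr_ae
    filter_upwards [hae] with x hx
    rw [hx]
  have c2 : ∫ x, ‖f x‖ ^ 2 = ∫ x, ‖h2.toLp f x‖ ^ 2 := by
    apply integral_congr_ae
    filter_upwards [h2.coeFn_toLp] with x hx
    rw [hx]
  rw [c1, c2, k2]

lemma conv_symm (f h : ℝ → ℝ) (t : ℝ) : conv f h t = ∫ s in (0 : ℝ)..t, f s * h (t - s) := by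
  unfold conv
  have := intervalIntegral.integral_comp_sub_left (a := 0) (b := t) (fun s => f s * h (t - s)) t
  simpa using this

lemma conv_hasDerivAt (f h : ℝ → ℝ) (hf : Continuous f) (hh : ContDiff ℝ 1 h) (t : ℝ) :
    HasDerivAt (conv f h) (f t * h 0 + conv f (deriv h) t) t := by
  have hhc : Continuous h := hh.continuous
  have hh' : Continuous (deriv h) := hh.continuous_deriv le_rfl
  have hd : ∀ x, HasDerivAt h (deriv h x) x := fun x =>
    (hh.differentiable (by norm_num) x).hasDerivAt
  let F : ℝ → ℝ → ℝ := fun a b => ∫ s in (0 : ℝ)..a, f s * h (b - s)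
  let d1 : ℝ → ℝ → ℝ := fun a b => f a * h (b - a)
  let d2 : ℝ → ℝ → ℝ := fun a b => ∫ s in (0 : ℝ)..a, f s * deriv h (b - s)
  have cont2 : Continuous (fun p : ℝ × ℝ => d2 p.1 p.2) := by
    apply intervalIntegral.continuous_parametric_intervalIntegral_of_continuous
      (f := fun (p : ℝ × ℝ) s => f s * deriv h (p.2 - s)) _ continuous_fst
    simp only [Function.uncurry_def]
    fun_prop
  have H := hasStrictFDerivAt_uncurry_coprod (𝕜 := ℝ) (u := (t, t)) (f := F)
    (f₁ := fun a b => ContinuousLinearMap.toSpanSingleton ℝ (d1 a b))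
    (f₂ := fun a b => ContinuousLinearMap.toSpanSingleton ℝ (d2 a b))
    (Filter.Eventually.of_forall fun v => ?_) (Filter.Eventually.of_forall fun v => ?_) ?_ ?_
  · have H2 : HasFDerivAt (fun x : ℝ => (x, x)) ((ContinuousLinearMap.id ℝ ℝ).prod (ContinuousLinearMap.id ℝ ℝ)) t :=
      (hasFDerivAt_id t).prodMk (hasFDerivAt_id t)
    have H3 := (HasFDerivAt.comp (f := fun x : ℝ => (x, x)) t H.hasFDerivAt H2).hasDerivAt
    have e : conv f h = (↿F ∘ fun x : ℝ => (x, x)) := by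
      ext x; rw [conv_symm]; rfl
    rw [e]
    refine H3.congr_deriv ?_
    rw [conv_symm]
    simp [d1, d2, Function.HasUncurry.uncurry]
  · have : HasDerivAt (fun a => F a v.2) (d1 v.1 v.2) v.1 := by
      have hc : Continuous fun s => f s * h (v.2 - s) := by fun_prop
      exact intervalIntegral.integral_hasDerivAt_right (hc.intervalIntegrable _ _)
        (hc.stronglyMeasurableAtFilter _ _) hc.continuousAt
    exact this.hasFDerivAt
  · have : HasDerivAt (fun b => F v.1 b) (d2 v.1 v.2) v.2 := by
      obtain ⟨a, b⟩ := v
      have hK : IsCompact (Metric.closedBall b 1 ×ˢ Set.uIcc 0 a) :=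
        (isCompact_closedBall b 1).prod isCompact_uIcc
      obtain ⟨B, hB⟩ := hK.exists_bound_of_continuousOn
        (f := fun p : ℝ × ℝ => f p.2 * deriv h (p.1 - p.2)) (by fun_prop)
      refine (intervalIntegral.hasDerivAt_integral_of_dominated_loc_of_deriv_le
        (F := fun b s => f s * h (b - s)) (F' := fun b s => f s * deriv h (b - s))
        (bound := fun _ => B) (Metric.closedBall_mem_nhds b one_pos) ?_ ?_ ?_ ?_ ?_ ?_).2
      · exact Filter.Eventually.of_forall fun x => by
          apply Continuous.aestronglyMeasurable; fun_prop
      · apply Continuous.intervalIntegrable; fun_prop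
      · apply Continuous.aestronglyMeasurable; fun_prop
      · exact Filter.Eventually.of_forall fun s hs x hx =>
          hB (x, s) ⟨hx, Set.uIoc_subset_uIcc hs⟩
      · simp
      · refine Filter.Eventually.of_forall fun s hs x hx => ?_
        have := (hd (x - s)).comp x ((hasDerivAt_id x).sub_const s)
        simpa using this.const_mul (f s)
    exact this.hasFDerivAt
  · apply Continuous.continuousAt
    have : Continuous fun p : ℝ × ℝ => d1 p.1 p.2 := by fun_prop
    exact (ContinuousLinearMap.toSpanSingletonCLE (𝕜 := ℝ) (E := ℝ)).continuous.comp this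
  · apply Continuous.continuousAt
    exact (ContinuousLinearMap.toSpanSingletonCLE (𝕜 := ℝ) (E := ℝ)).continuous.comp cont2

structure GoodFn (f : ℝ → ℝ) : Prop where
  meas : AEStronglyMeasurable f (volume.restrict (Set.Ioi (0 : ℝ)))
  bdd : ∃ K : ℝ, ∀ t : ℝ, 0 < t → |f t| ≤ K

lemma GoodFn.sub {f g : ℝ → ℝ} (hf : GoodFn f) (hg : GoodFn g) :
    GoodFn (fun t => f t - g t) := by
  refine ⟨hf.meas.sub hg.meas, ?_⟩
  obtain ⟨K, hK⟩ := hf.bdd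
  obtain ⟨L, hL⟩ := hg.bdd
  exact ⟨K + L, fun t ht => (abs_sub _ _).trans (add_le_add (hK t ht) (hL t ht))⟩

lemma GoodFn.integrableOn {f : ℝ → ℝ} (hf : GoodFn f) {z : ℂ} (hz : 0 < z.re) :
    IntegrableOn (fun t : ℝ => (f t : ℂ) * Complex.exp (-z * t)) (Set.Ioi 0) := by
  obtain ⟨K, hK⟩ := hf.bdd
  have hi : IntegrableOn (fun t : ℝ => K * Real.exp (-z.re * t)) (Set.Ioi 0) :=
    (exp_neg_integrableOn_Ioi 0 hz).const_mul K
  refine Integrable.mono' hi ?_ ?_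
  · refine AEStronglyMeasurable.mul ?_ ?_
    · exact Complex.continuous_ofReal.comp_aestronglyMeasurable hf.meas
    · apply Continuous.aestronglyMeasurable; fun_prop
  · refine (ae_restrict_iff' measurableSet_Ioi).2 (Filter.Eventually.of_forall fun t ht => ?_)
    rw [norm_mul, Complex.norm_real, Complex.norm_exp, Real.norm_eq_abs]
    simp only [neg_mul, neg_re, mul_re, ofReal_re, ofReal_im, mul_zero, sub_zero]
    exact mul_le_mul_of_nonneg_right (hK t ht) (Real.exp_pos _).le

lemma GoodFn.sqIntegrableOn {f : ℝ → ℝ} (hf : GoodFn f) {ω : ℝ} (hω : 0 < ω) :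
    IntegrableOn (fun t : ℝ => f t ^ 2 * Real.exp (-2 * ω * t)) (Set.Ioi 0) := by
  obtain ⟨K, hK⟩ := hf.bdd
  have hi : IntegrableOn (fun t : ℝ => K ^ 2 * Real.exp (-(2 * ω) * t)) (Set.Ioi 0) :=
    (exp_neg_integrableOn_Ioi 0 (by positivity)).const_mul _
  refine Integrable.mono' hi ?_ ?_
  · refine AEStronglyMeasurable.mul (hf.meas.pow 2) ?_
    apply Continuous.aestronglyMeasurable; fun_prop
  · refine (ae_restrict_iff' measurableSet_Ioi).2 (Filter.Eventually.of_forall fun t ht => ?_)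
    rw [Real.norm_eq_abs, abs_mul, abs_pow, abs_of_pos (Real.exp_pos _)]
    rw [show -(2 * ω) * t = -2 * ω * t by ring]
    gcongr
    exact hK t ht

lemma laplace_sub {f g : ℝ → ℝ} (hf : GoodFn f) (hg : GoodFn g) {z : ℂ} (hz : 0 < z.re) :
    laplace (fun t => f t - g t) z = laplace f z - laplace g z := by
  unfold laplace
  rw [← integral_sub (hf.integrableOn hz) (hg.integrableOn hz)]
  congr 1 with t
  push_cast; ring

lemma laplace_congr {f g : ℝ → ℝ} (h : ∀ t : ℝ, 0 < t → f t = g t) (z : ℂ) :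
    laplace f z = laplace g z := by
  unfold laplace
  exact setIntegral_congr_fun measurableSet_Ioi fun t ht => by simp only [h t ht]

lemma laplace_conv {f h : ℝ → ℝ} (hf : GoodFn f) (hh : GoodFn h) {z : ℂ} (hz : 0 < z.re) :
    laplace (conv f h) z = laplace f z * laplace h z := by
  have := integral_posConvolution (hf.integrableOn hz) (hh.integrableOn hz)
    (ContinuousLinearMap.mul ℝ ℂ)
  simp only [ContinuousLinearMap.mul_apply'] at this
  unfold laplace
  rw [← this]
  congr 1 with t
  rw [conv_symm, ← intervalIntegral.integral_ofReal, ← intervalIntegral.integral_mul_const]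
  congr 1 with s
  have : Complex.exp (-z * t) = Complex.exp (-z * s) * Complex.exp (-z * ((t - s : ℝ) : ℂ)) := by
    rw [← Complex.exp_add]; congr 1; push_cast; ring
  rw [this]; push_cast; ring

open FourierTransform in
lemma planch_laplace {f : ℝ → ℝ} (hf : GoodFn f) {ω : ℝ} (hω : 0 < ω) :
    Integrable (fun ξ : ℝ => ‖laplace f ((ω : ℂ) + ((2 * π * ξ : ℝ) : ℂ) * Complex.I)‖ ^ 2) ∧
    ∫ ξ : ℝ, ‖laplace f ((ω : ℂ) + ((2 * π * ξ : ℝ) : ℂ) * Complex.I)‖ ^ 2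
      = ∫ t in Set.Ioi (0 : ℝ), f t ^ 2 * Real.exp (-2 * ω * t) := by
  set W : ℝ → ℂ := Set.indicator (Set.Ioi 0) (fun t : ℝ => (f t : ℂ) * Complex.exp (-(ω : ℂ) * t))
    with hW
  have h1 : Integrable W := by
    rw [hW, integrable_indicator_iff measurableSet_Ioi]
    exact hf.integrableOn (by simpa using hω)
  have hn : (fun t => ‖W t‖ ^ 2)
      = Set.indicator (Set.Ioi 0) (fun t : ℝ => f t ^ 2 * Real.exp (-2 * ω * t)) := by
    ext t
    by_cases ht : t ∈ Set.Ioi (0 : ℝ)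
    · simp only [hW, Set.indicator_of_mem ht]
      rw [norm_mul, Complex.norm_real, Complex.norm_exp, Real.norm_eq_abs, mul_pow, sq_abs,
        ← Real.exp_nat_mul]
      congr 2
      simp; ring
    · simp [hW, Set.indicator_of_notMem ht]
  have h2 : MemLp W 2 := by
    rw [memLp_two_iff_integrable_sq_norm h1.aestronglyMeasurable, hn,
      integrable_indicator_iff measurableSet_Ioi]
    exact hf.sqIntegrableOn hω
  have hF : ∀ ξ : ℝ, laplace f ((ω : ℂ) + ((2 * π * ξ : ℝ) : ℂ) * Complex.I) = 𝓕 W ξ := by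
    intro ξ
    rw [Real.fourier_eq']
    unfold laplace
    rw [← integral_indicator measurableSet_Ioi]
    congr 1 with t
    by_cases ht : t ∈ Set.Ioi (0 : ℝ)
    · simp only [hW, Set.indicator_of_mem ht, smul_eq_mul]
      rw [mul_left_comm, ← Complex.exp_add]
      congr 2
      simp
      ring
    · simp [hW, Set.indicator_of_notMem ht]
  obtain ⟨p1, p2⟩ := planch_aux W h1 h2
  simp only [hF]
  refine ⟨(memLp_two_iff_integrable_sq_norm p1.aestronglyMeasurable).1 p1, ?_⟩
  rw [p2, hn, integral_indicator measurableSet_Ioi]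

lemma conv_bound {f h : ℝ → ℝ} {C σ : ℝ} (hC : 0 < C)
    (hf : ∀ t : ℝ, 0 ≤ t → |f t| ≤ C * Real.exp (-σ * t))
    (hh : ∀ t : ℝ, 0 ≤ t → |h t| ≤ C * Real.exp (-σ * t)) (t : ℝ) (ht : 0 ≤ t) :
    |conv f h t| ≤ C ^ 2 * Real.exp (-σ * t) * t := by
  unfold conv
  have := intervalIntegral.norm_integral_le_of_norm_le_const (a := 0) (b := t)
    (f := fun s => f (t - s) * h s) (C := C ^ 2 * Real.exp (-σ * t)) ?_
  · simpa [abs_of_nonneg ht] using this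
  · intro s hs
    rw [Set.uIoc_of_le ht] at hs
    rw [norm_mul, Real.norm_eq_abs, Real.norm_eq_abs]
    calc _ ≤ (C * Real.exp (-σ * (t - s))) * (C * Real.exp (-σ * s)) := by
          gcongr
          · exact hf _ (by linarith [hs.2])
          · exact hh _ hs.1.le
      _ = C ^ 2 * (Real.exp (-σ * (t - s)) * Real.exp (-σ * s)) := by ring
      _ = _ := by rw [← Real.exp_add]; ring_nf

lemma conv_bound' {f h : ℝ → ℝ} {C σ : ℝ} (hC : 0 < C) (hσ : 0 < σ)
    (hf : ∀ t : ℝ, 0 ≤ t → |f t| ≤ C * Real.exp (-σ * t))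
    (hh : ∀ t : ℝ, 0 ≤ t → |h t| ≤ C * Real.exp (-σ * t)) (t : ℝ) (ht : 0 ≤ t) :
    |conv f h t| ≤ C ^ 2 / σ := by
  refine (conv_bound hC hf hh t ht).trans ?_
  rw [le_div_iff₀ hσ, mul_assoc, mul_assoc]
  have h1 : σ * t ≤ Real.exp (σ * t) := by linarith [Real.add_one_le_exp (σ * t)]
  have h2 : Real.exp (-σ * t) * (t * σ) ≤ 1 := by
    rw [neg_mul, Real.exp_neg, inv_mul_le_iff₀ (Real.exp_pos _)]
    linarith
  nlinarith [sq_nonneg C]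

lemma goodFn_of_decay {f : ℝ → ℝ} {C σ : ℝ} (hC : 0 < C) (hσ : 0 < σ) (hc : Continuous f)
    (hf : ∀ t : ℝ, 0 ≤ t → |f t| ≤ C * Real.exp (-σ * t)) : GoodFn f :=
  ⟨hc.aestronglyMeasurable, C, fun t ht => (hf t ht.le).trans (by
    have : Real.exp (-σ * t) ≤ 1 := Real.exp_le_one_iff.2 (by nlinarith)
    nlinarith)⟩

/-- Everything needed about `g = f * h`. -/
lemma g_facts {f h g : ℝ → ℝ} {C σ : ℝ} (hC : 0 < C) (hσ : 0 < σ)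
    (cf : ContDiff ℝ (⊤ : ℕ∞) f) (ch : ContDiff ℝ (⊤ : ℕ∞) h)
    (hf : ∀ t : ℝ, 0 ≤ t → |f t| ≤ C * Real.exp (-σ * t))
    (hh : ∀ t : ℝ, 0 ≤ t → |h t| ≤ C * Real.exp (-σ * t))
    (hh' : ∀ t : ℝ, 0 ≤ t → |deriv h t| ≤ C * Real.exp (-σ * t))
    (hg : ∀ t : ℝ, 0 ≤ t → g t = conv f h t) :
    GoodFn g ∧ GoodFn (deriv g) ∧ ∀ z : ℂ, 0 < z.re →
      laplace g z = laplace f z * laplace h z ∧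
      laplace (deriv g) z = z * laplace g z := by
  have ch1 : ContDiff ℝ 1 h := ch.of_le (by exact_mod_cast le_top)
  have hder : ∀ t, HasDerivAt (conv f h) (f t * h 0 + conv f (deriv h) t) t :=
    conv_hasDerivAt f h cf.continuous ch1
  have hcc : Continuous (conv f h) :=
    continuous_iff_continuousAt.2 fun t => (hder t).continuousAt
  have gf := goodFn_of_decay hC hσ cf.continuous hf
  have gh := goodFn_of_decay hC hσ ch.continuous hh
  have hgd : ∀ t, 0 < t → HasDerivAt g (f t * h 0 + conv f (deriv h) t) t := fun t ht =>
    (hder t).congr_of_eventuallyEq (by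
      filter_upwards [Ioi_mem_nhds ht] with x hx using hg x (le_of_lt hx))
  have gg : GoodFn g := by
    refine ⟨hcc.aestronglyMeasurable.congr ?_, C ^ 2 / σ, fun t ht => ?_⟩
    · refine (ae_restrict_iff' measurableSet_Ioi).2 (Filter.Eventually.of_forall fun t ht => ?_)
      exact (hg t (le_of_lt ht)).symm
    · rw [hg t ht.le]; exact conv_bound' hC hσ hf hh t ht.le
  have gg' : GoodFn (deriv g) := by
    obtain ⟨K, hK⟩ := gf.bdd
    refine ⟨(measurable_deriv g).aestronglyMeasurable, K * |h 0| + C ^ 2 / σ, fun t ht => ?_⟩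
    rw [(hgd t ht).deriv]
    refine (abs_add_le _ _).trans (add_le_add ?_ (conv_bound' hC hσ hf hh' t ht.le))
    rw [abs_mul]
    exact mul_le_mul_of_nonneg_right (hK t ht) (abs_nonneg _)
  refine ⟨gg, gg', fun z hz => ⟨?_, ?_⟩⟩
  · rw [laplace_congr (fun t ht => hg t ht.le), laplace_conv gf gh hz]
  · have hi := (gg'.integrableOn hz).sub ((gg.integrableOn hz).const_mul z)
    have key := integral_Ioi_of_hasDerivAt_of_tendsto (a := 0) (m := (0 : ℂ))
      (f := fun t : ℝ => ((conv f h t : ℝ) : ℂ) * Complex.exp (-z * t))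
      (f' := fun t : ℝ => ((deriv g t : ℝ) : ℂ) * Complex.exp (-z * t)
        - z * (((g t : ℝ) : ℂ) * Complex.exp (-z * t))) ?_ ?_ hi ?_
    · rw [integral_sub (gg'.integrableOn hz) ((gg.integrableOn hz).const_mul z),
        integral_const_mul] at key
      have h0 : conv f h 0 = 0 := by simp [conv]
      simp only [h0, Complex.ofReal_zero, zero_mul, sub_zero] at key
      exact sub_eq_zero.1 key
    · apply Continuous.continuousWithinAt
      fun_prop
    · intro t ht
      have e1 : HasDerivAt (fun t : ℝ => ((conv f h t : ℝ) : ℂ)) ((deriv g t : ℝ) : ℂ) t := by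
        rw [(hgd t ht).deriv]; exact (hder t).ofReal_comp
      have e2 : HasDerivAt (fun t : ℝ => Complex.exp (-z * t)) (Complex.exp (-z * t) * (-z)) t := by
        have : HasDerivAt (fun t : ℝ => -z * (t : ℂ)) (-z) t := by
          simpa using (Complex.ofRealCLM.hasDerivAt (x := t)).const_mul (-z)
        exact this.cexp
      refine (e1.mul e2).congr_deriv ?_
      rw [hg t (le_of_lt ht)]; ring
    · have hb : Filter.Tendsto (fun t : ℝ => C ^ 2 / σ * Real.exp (-(z.re * t))) Filter.atTop
          (nhds 0) := by
        have := (Real.tendsto_exp_neg_atTop_nhds_zero.comp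
          (Filter.tendsto_id.const_mul_atTop hz)).const_mul (C ^ 2 / σ)
        simpa using this
      refine squeeze_zero_norm' ?_ hb
      filter_upwards [Filter.eventually_ge_atTop (0 : ℝ)] with t ht
      rw [norm_mul, Complex.norm_real, Complex.norm_exp, Real.norm_eq_abs]
      simp only [neg_mul, neg_re, mul_re, ofReal_re, ofReal_im, mul_zero, sub_zero]
      exact mul_le_mul_of_nonneg_right (conv_bound' hC hσ hf hh t ht) (Real.exp_pos _).le

/-- **Error bound with estimated `h_ε` and `g_ε`.** If `g = γ*h` and
`g_ε = γ_{g_ε,h_ε}*h_ε`, then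
`‖γ − γ_{g_ε,h_ε}‖²_{L²(ρ)} ≤ (2/m_ω^{h_ε})(M_ω^γ ‖h − h_ε‖²_{L²(ρ)} + ‖g − g_ε‖²_{H¹_α(ρ)})`. -/
theorem error_bound_estimated_h (γ γε h hε g gε : ℝ → ℝ) (C σ α₁ α₂ ω : ℝ)
    (hC : 0 < C) (hσ : 0 < σ) (hα₁ : 0 < α₁) (hα₂ : 0 < α₂) (hα : α₁ + α₂ = 1)
    (hω : 0 < ω)
    (hsmoothγ : ContDiff ℝ (⊤ : ℕ∞) γ) (hsmoothγε : ContDiff ℝ (⊤ : ℕ∞) γε)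
    (hsmoothh : ContDiff ℝ (⊤ : ℕ∞) h) (hsmoothhε : ContDiff ℝ (⊤ : ℕ∞) hε)
    (hdecayγ : ∀ t : ℝ, 0 ≤ t → |γ t| ≤ C * Real.exp (-σ * t))
    (hdecayγε : ∀ t : ℝ, 0 ≤ t → |γε t| ≤ C * Real.exp (-σ * t))
    (hdecayh : ∀ t : ℝ, 0 ≤ t → |h t| ≤ C * Real.exp (-σ * t))
    (hdecayhε : ∀ t : ℝ, 0 ≤ t → |hε t| ≤ C * Real.exp (-σ * t))
    (hdecayγ' : ∀ t : ℝ, 0 ≤ t → |deriv γ t| ≤ C * Real.exp (-σ * t))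
    (hdecayh' : ∀ t : ℝ, 0 ≤ t → |deriv h t| ≤ C * Real.exp (-σ * t))
    (hdecayhε' : ∀ t : ℝ, 0 ≤ t → |deriv hε t| ≤ C * Real.exp (-σ * t))
    (hmε : 0 < ⨅ τ : ℝ, specWeight hε α₁ α₂ ω τ)
    (hMγ : BddAbove (Set.range fun τ : ℝ => specWeight γ α₁ α₂ ω τ))
    (hg : ∀ t : ℝ, 0 ≤ t → g t = conv γ h t)
    (hgε : ∀ t : ℝ, 0 ≤ t → gε t = conv γε hε t) :
    (∫ t in Set.Ioi (0 : ℝ), (γ t - γε t) ^ 2 * Real.exp (-2 * ω * t))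
      ≤ (2 / ⨅ τ : ℝ, specWeight hε α₁ α₂ ω τ) *
        ((⨆ τ : ℝ, specWeight γ α₁ α₂ ω τ) *
            (∫ t in Set.Ioi (0 : ℝ), (h t - hε t) ^ 2 * Real.exp (-2 * ω * t)) +
          ∫ t in Set.Ioi (0 : ℝ),
            (α₁ * (g t - gε t) ^ 2 + α₂ * (deriv g t - deriv gε t) ^ 2) *
              Real.exp (-2 * ω * t)) := by
  have cγ := goodFn_of_decay hC hσ hsmoothγ.continuous hdecayγ
  have cγε := goodFn_of_decay hC hσ hsmoothγε.continuous hdecayγε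
  have ch := goodFn_of_decay hC hσ hsmoothh.continuous hdecayh
  have chε := goodFn_of_decay hC hσ hsmoothhε.continuous hdecayhε
  obtain ⟨gg, gg', Lg⟩ := g_facts hC hσ hsmoothγ hsmoothh hdecayγ hdecayh hdecayh' hg
  obtain ⟨ge, ge', Lge⟩ := g_facts hC hσ hsmoothγε hsmoothhε hdecayγε hdecayhε hdecayhε' hgε
  obtain ⟨iγ, eγ⟩ := planch_laplace (cγ.sub cγε) hω
  obtain ⟨ih, eh⟩ := planch_laplace (ch.sub chε) hω
  obtain ⟨ig, eg⟩ := planch_laplace (gg.sub ge) hω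
  obtain ⟨id, ed⟩ := planch_laplace (gg'.sub ge') hω
  set m := ⨅ τ : ℝ, specWeight hε α₁ α₂ ω τ with hm
  set M := ⨆ τ : ℝ, specWeight γ α₁ α₂ ω τ with hM
  have split : (∫ t in Set.Ioi (0 : ℝ),
      (α₁ * (g t - gε t) ^ 2 + α₂ * (deriv g t - deriv gε t) ^ 2) * Real.exp (-2 * ω * t))
      = α₁ * (∫ t in Set.Ioi (0 : ℝ), (g t - gε t) ^ 2 * Real.exp (-2 * ω * t))
        + α₂ * (∫ t in Set.Ioi (0 : ℝ), (deriv g t - deriv gε t) ^ 2 * Real.exp (-2 * ω * t)) := by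
    rw [← integral_const_mul, ← integral_const_mul,
      ← integral_add (((gg.sub ge).sqIntegrableOn hω).const_mul α₁)
        (((gg'.sub ge').sqIntegrableOn hω).const_mul α₂)]
    congr 1 with t
    ring
  have isum : Integrable (fun ξ : ℝ =>
      α₁ * ‖laplace (fun t => g t - gε t) ((ω : ℂ) + ((2 * π * ξ : ℝ) : ℂ) * Complex.I)‖ ^ 2 +
      α₂ * ‖laplace (fun t => deriv g t - deriv gε t)
        ((ω : ℂ) + ((2 * π * ξ : ℝ) : ℂ) * Complex.I)‖ ^ 2) :=
    (ig.const_mul α₁).add (id.const_mul α₂)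
  rw [split, ← eγ, ← eh, ← eg, ← ed, div_mul_eq_mul_div, le_div_iff₀ hmε, mul_comm _ m,
    ← integral_const_mul, ← integral_const_mul, ← integral_const_mul, ← integral_const_mul,
    ← integral_add (ig.const_mul α₁) (id.const_mul α₂),
    ← integral_add (ih.const_mul M) isum,
    ← integral_const_mul]
  refine integral_mono (iγ.const_mul m)
    (((ih.const_mul M).add isum).const_mul 2) fun ξ => ?_
  simp only [Pi.add_apply]
  have hmle : m ≤ specWeight hε α₁ α₂ ω (2 * π * ξ) := by
    refine ciInf_le ⟨0, ?_⟩ _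
    rintro _ ⟨τ, rfl⟩
    simp only [specWeight]; positivity
  have hMle : specWeight γ α₁ α₂ ω (2 * π * ξ) ≤ M := le_ciSup hMγ _
  simp only [specWeight] at hmle hMle
  set z : ℂ := (ω : ℂ) + ((2 * π * ξ : ℝ) : ℂ) * Complex.I with hzdef
  have hz : 0 < z.re := by simpa [hzdef] using hω
  obtain ⟨A1, A2⟩ := Lg z hz
  obtain ⟨B1, B2⟩ := Lge z hz
  rw [laplace_sub cγ cγε hz, laplace_sub ch chε hz, laplace_sub gg ge hz, laplace_sub gg' ge' hz,
    A2, B2, A1, B1, ← mul_sub]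
  rw [norm_mul, mul_pow] at hmle hMle ⊢
  set a := laplace γ z
  set b := laplace γε z
  set c := laplace h z
  set d := laplace hε z
  set p := ‖z‖ ^ 2 with hp
  have hp0 : 0 ≤ p := by positivity
  have id1 : ‖a - b‖ ^ 2 * ‖d‖ ^ 2 ≤ 2 * (‖a‖ ^ 2 * ‖c - d‖ ^ 2 + ‖a * c - b * d‖ ^ 2) := by
    have e : (a - b) * d = (a * c - b * d) - a * (c - d) := by ring
    have n1 : ‖a - b‖ * ‖d‖ ≤ ‖a * c - b * d‖ + ‖a‖ * ‖c - d‖ := by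
      rw [← norm_mul, e, ← norm_mul]; exact norm_sub_le _ _
    have n2 : (‖a - b‖ * ‖d‖) ^ 2 ≤ (‖a * c - b * d‖ + ‖a‖ * ‖c - d‖) ^ 2 := by gcongr
    nlinarith [sq_nonneg (‖a * c - b * d‖ - ‖a‖ * ‖c - d‖)]
  have hw : 0 ≤ α₁ + α₂ * p := by positivity
  calc m * ‖a - b‖ ^ 2 ≤ (α₁ * ‖d‖ ^ 2 + α₂ * (p * ‖d‖ ^ 2)) * ‖a - b‖ ^ 2 := by gcongr
    _ = (α₁ + α₂ * p) * (‖a - b‖ ^ 2 * ‖d‖ ^ 2) := by ring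
    _ ≤ (α₁ + α₂ * p) * (2 * (‖a‖ ^ 2 * ‖c - d‖ ^ 2 + ‖a * c - b * d‖ ^ 2)) := by gcongr
    _ = 2 * ((α₁ * ‖a‖ ^ 2 + α₂ * (p * ‖a‖ ^ 2)) * ‖c - d‖ ^ 2
          + (α₁ * ‖a * c - b * d‖ ^ 2 + α₂ * (p * ‖a * c - b * d‖ ^ 2))) := by ring
    _ ≤ 2 * (M * ‖c - d‖ ^ 2
          + (α₁ * ‖a * c - b * d‖ ^ 2 + α₂ * (p * ‖a * c - b * d‖ ^ 2))) := by gcongr
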